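/- arXiv:math/0111272 — 2 statements merged into one kernel-verified Lean document; each statement's English description precedes it below -/
import Mathlib

section
/- Let n ≥ 2, p > 1 not an even integer, f ∈ L^∞(S^{n-1}) bounded, and H(x) = ∫_{S^{n-1}} |⟨x,ξ⟩|^p f(ξ) dξ. Then for u ∈ R^n \ {0}, the second partial derivatives are given by ∂²H/∂x_i∂x_j (u) = p(p−1) ∫_{S^{n-1}} |⟨u,ξ⟩|^{p−2} ξ_i ξ_j f(ξ) dξ. -/
open MeasureTheory Real Set Metric
open scoped RealInnerProductSpace ENNReal MeasureTheory

noncomputable section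


/-- Partial derivative in the `i`-th coordinate direction. -/
def pd (n : ℕ) (i : Fin n) (g : EuclideanSpace ℝ (Fin n) → ℝ) :
    EuclideanSpace ℝ (Fin n) → ℝ :=
  fun x => fderiv ℝ g x (EuclideanSpace.single i 1)

/-- Iterated mixed partial derivative along a list of coordinate directions
(a multi-index `α` corresponds to the list containing `i` with multiplicity `α_i`). -/
def mpd (n : ℕ) : List (Fin n) → (EuclideanSpace ℝ (Fin n) → ℝ) → EuclideanSpace ℝ (Fin n) → ℝ
  | [], g => g
  | i :: L, g => pd n i (mpd n L g)


lemma phi_hasDerivAt (p : ℝ) (hp : 1 < p) (a : ℝ) (h : a ≠ 0 ∨ 2 < p) :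
    HasDerivAt (fun x : ℝ => |x| ^ (p - 2) * x) ((p - 1) * |a| ^ (p - 2)) a := by
  by_cases ha : a = 0
  · subst ha
    have h2 : 2 < p := by tauto
    have hc : ContinuousAt (fun x : ℝ => |x| ^ (p - 2)) 0 :=
      (continuous_abs.continuousAt).rpow_const (Or.inr (by linarith))
    rw [hasDerivAt_iff_tendsto_slope]
    have h0 : (p - 1) * |(0:ℝ)| ^ (p - 2) = |(0:ℝ)| ^ (p - 2) := by
      rw [abs_zero, Real.zero_rpow (by linarith)]; simp
    rw [h0]
    refine (hc.tendsto.mono_left nhdsWithin_le_nhds).congr' ?_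
    filter_upwards [self_mem_nhdsWithin] with x hx
    have hx : x ≠ 0 := hx
    simp [slope_def_field, hx]
  · have h1 := ((hasDerivAt_abs ha).rpow_const (p := p - 2) (Or.inl (abs_ne_zero.2 ha))).mul
      (hasDerivAt_id a)
    refine h1.congr_deriv ?_
    have h3 : (SignType.sign a : ℝ) * a = |a| := by
      rw [mul_comm]; exact self_mul_sign a
    have h4 : |a| ^ (p - 2) = |a| ^ (p - 2 - 1) * |a| := by
      rw [← Real.rpow_add_one (abs_ne_zero.2 ha)]; ring_nf
    simp only [id]
    calc _ = (p - 2) * |a| ^ (p - 2 - 1) * ((SignType.sign a : ℝ) * a) + |a| ^ (p - 2) := by ring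
      _ = _ := by rw [h3, mul_assoc, ← h4]; ring

lemma phi_lip_big (p : ℝ) (hp : 2 < p) (R a b : ℝ) (ha : |a| ≤ R) (hb : |b| ≤ R) :
    |(|b| ^ (p - 2) * b) - (|a| ^ (p - 2) * a)| ≤ (p - 1) * R ^ (p - 2) * |b - a| := by
  have := Convex.norm_image_sub_le_of_norm_hasDerivWithin_le (s := Set.Icc (-R) R)
    (f := fun x : ℝ => |x| ^ (p - 2) * x) (f' := fun x => (p - 1) * |x| ^ (p - 2))
    (C := (p - 1) * R ^ (p - 2)) (x := a) (y := b)
    (fun x _ => (phi_hasDerivAt p (by linarith) x (Or.inr hp)).hasDerivWithinAt) ?_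
    (convex_Icc _ _) (abs_le.1 ha) (abs_le.1 hb)
  · simpa using this
  · intro x hx
    have : |x| ≤ R := abs_le.2 hx
    rw [Real.norm_of_nonneg (mul_nonneg (by linarith) (by positivity))]
    gcongr
    · linarith

/-- normalized version -/
lemma phi_lip_one (p : ℝ) (hp : 1 < p) (hp2 : p < 2) (b : ℝ) :
    |(|b| ^ (p - 2) * b) - 1| ≤ 2 * |b - 1| := by
  rcases lt_trichotomy b 0 with hb | hb | hb
  · have e : |b| ^ (p - 2) * b = - (-b) ^ (p - 1) := by
      rw [abs_of_neg hb, show p - 1 = p - 2 + 1 by ring, Real.rpow_add_one (by linarith)]; ring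
    have h1 : (-b) ^ (p - 1) ≤ 1 + -b := by
      rcases le_total (-b) 1 with h | h
      · have := Real.rpow_le_one (x := -b) (z := p - 1) (by linarith) h (by linarith)
        linarith
      · have := Real.rpow_le_rpow_of_exponent_le h (show p - 1 ≤ 1 by linarith)
        rw [Real.rpow_one] at this; linarith
    have h2 : 0 ≤ (-b) ^ (p - 1) := Real.rpow_nonneg (by linarith) _
    rw [e, abs_of_neg (by linarith : b - 1 < 0), abs_of_neg (by linarith)]
    linarith
  · subst hb; norm_num
  · have e : |b| ^ (p - 2) * b = b ^ (p - 1) := by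
      rw [abs_of_pos hb, show p - 1 = p - 2 + 1 by ring, Real.rpow_add_one (by linarith)]
    rw [e]
    rcases le_total b 1 with h | h
    · have h1 := Real.rpow_le_rpow_of_exponent_ge hb h (show p - 1 ≤ 1 by linarith)
      have h2 := Real.rpow_le_one (x := b) (z := p - 1) (by linarith) h (by linarith)
      rw [Real.rpow_one] at h1
      rw [abs_of_nonpos (by linarith), abs_of_nonpos (by linarith)]; linarith
    · have h1 := Real.rpow_le_rpow_of_exponent_le h (show p - 1 ≤ 1 by linarith)
      have h2 := Real.one_le_rpow h (show 0 ≤ p - 1 by linarith)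
      rw [Real.rpow_one] at h1
      rw [abs_of_nonneg (by linarith), abs_of_nonneg (by linarith)]; linarith

lemma phi_lip_small (p : ℝ) (hp : 1 < p) (hp2 : p < 2) (a b : ℝ) (ha : a ≠ 0) :
    |(|b| ^ (p - 2) * b) - (|a| ^ (p - 2) * a)| ≤ 2 * |a| ^ (p - 2) * |b - a| := by
  have h := phi_lip_one p hp hp2 (b / a)
  have ha' : 0 < |a| := abs_pos.2 ha
  have e1 : |b| ^ (p - 2) * b = (|a| ^ (p - 2) * a) * (|b / a| ^ (p - 2) * (b / a)) := by
    rw [abs_div, Real.div_rpow (abs_nonneg _) (abs_nonneg _)]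
    have : |a| ^ (p - 2) ≠ 0 := (Real.rpow_pos_of_pos ha' _).ne'
    field_simp
  have e2 : b - a = a * (b / a - 1) := by field_simp
  rw [e1, e2, ← mul_sub_one, abs_mul, abs_mul, abs_mul, abs_of_nonneg (by positivity : 0 ≤ |a| ^ (p - 2))]
  calc _ ≤ |a| ^ (p - 2) * |a| * (2 * |b / a - 1|) := by gcongr
    _ = _ := by ring

lemma phi_abs (p : ℝ) (hp : 1 < p) (a : ℝ) : |(|a| ^ (p - 2) * a)| = |a| ^ (p - 1) := by
  rcases eq_or_ne a 0 with rfl | ha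
  · simp [Real.zero_rpow (by linarith : p - 1 ≠ 0)]
  · rw [abs_mul, abs_of_nonneg (by positivity : 0 ≤ |a| ^ (p - 2)), show p - 1 = p - 2 + 1 by ring,
      Real.rpow_add_one (abs_ne_zero.2 ha)]

lemma piece_bound (n : ℕ) (E : Type*) [NormedAddCommGroup E] [InnerProductSpace ℝ E]
    [MeasurableSpace E] [BorelSpace E]
    (b : OrthonormalBasis (Fin n) ℝ E) (k : Fin n)
    (σ : ℝ) (hσ : |σ| = 1) (r : {i : Fin n // i ≠ k} → ℝ) (T : Set E)
    (h1 : ∀ ξ ∈ T, ‖ξ‖ = 1) (h2 : ∀ ξ ∈ T, 1 / (n : ℝ) ≤ σ * ⟪b k, ξ⟫)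
    (h3 : ∀ ξ ∈ T, ∀ i : {i : Fin n // i ≠ k}, |⟪b i, ξ⟫| ≤ r i) :
    μH[(n : ℝ) - 1] T ≤ ((n + n * n : NNReal) : ℝ≥0∞) ^ ((n : ℝ) - 1) *
      ∏ i, ENNReal.ofReal (2 * r i) := by
  have hn : 0 < n := k.pos
  have hn' : (0 : ℝ) < n := by exact_mod_cast hn
  have hn1 : (1 : ℝ) ≤ n := by exact_mod_cast hn
  have hcard : ((Fintype.card {i : Fin n // i ≠ k} : ℕ) : ℝ) = (n : ℝ) - 1 := by
    have : Fintype.card {i : Fin n // i ≠ k} = n - 1 := by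
      rw [Fintype.card_subtype_compl]; simp
    rw [this, Nat.cast_sub hn]; simp
  let g : T → ({i : Fin n // i ≠ k} → ℝ) := fun ξ i => ⟪b i, (ξ : E)⟫
  have hg : AntilipschitzWith (n + n * n : NNReal) g := by
    refine AntilipschitzWith.of_le_mul_dist ?_
    rintro ⟨ξ, hξ⟩ ⟨η, hη⟩
    set D := dist (g ⟨ξ, hξ⟩) (g ⟨η, hη⟩) with hD
    have hD0 : 0 ≤ D := dist_nonneg
    have hi : ∀ i, i ≠ k → |⟪b i, ξ⟫ - ⟪b i, η⟫| ≤ D := fun i hik => by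
      have := dist_le_pi_dist (g ⟨ξ, hξ⟩) (g ⟨η, hη⟩) ⟨i, hik⟩
      simpa [Real.dist_eq, g] using this
    have hb1 : ∀ ζ ∈ T, ∀ i, |⟪b i, ζ⟫| ≤ 1 := fun ζ hζ i => by
      have := abs_real_inner_le_norm (b i) ζ
      rwa [b.norm_eq_one, h1 ζ hζ, one_mul] at this
    have hsq : ∀ i, i ≠ k → |⟪b i, ξ⟫ ^ 2 - ⟪b i, η⟫ ^ 2| ≤ 2 * D := fun i hik => by
      rw [sq_sub_sq, abs_mul]
      have := abs_add_le ⟪b i, ξ⟫ ⟪b i, η⟫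
      have := hb1 ξ hξ i
      have := hb1 η hη i
      gcongr
      · linarith
      · exact hi i hik
    have hk2 : |⟪b k, ξ⟫ ^ 2 - ⟪b k, η⟫ ^ 2| ≤ n * (2 * D) := by
      have e1 := b.sum_sq_inner_right ξ
      have e2 := b.sum_sq_inner_right η
      rw [h1 ξ hξ, ← Finset.add_sum_erase _ _ (Finset.mem_univ k)] at e1
      rw [h1 η hη, ← Finset.add_sum_erase _ _ (Finset.mem_univ k)] at e2
      have e3 : ⟪b k, ξ⟫ ^ 2 - ⟪b k, η⟫ ^ 2 =
          - ∑ i ∈ Finset.univ.erase k, (⟪b i, ξ⟫ ^ 2 - ⟪b i, η⟫ ^ 2) := by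
        rw [Finset.sum_sub_distrib]; linarith
      rw [e3, abs_neg]
      refine (Finset.abs_sum_le_sum_abs _ _).trans ?_
      refine (Finset.sum_le_card_nsmul _ _ (2 * D)
        (fun i hi => hsq i (Finset.ne_of_mem_erase hi))).trans ?_
      rw [nsmul_eq_mul]
      gcongr
      have := Finset.card_erase_le (a := k) (s := (Finset.univ : Finset (Fin n)))
      simpa using this
    have hk : |⟪b k, ξ⟫ - ⟪b k, η⟫| ≤ n * n * D := by
      have hsum : 2 / (n : ℝ) ≤ |⟪b k, ξ⟫ + ⟪b k, η⟫| := by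
        have := h2 ξ hξ
        have := h2 η hη
        have := le_abs_self (σ * (⟪b k, ξ⟫ + ⟪b k, η⟫))
        rw [abs_mul, hσ, one_mul] at this
        have e : 2 / (n : ℝ) = 1 / n + 1 / n := by ring
        rw [e]; linarith
      rw [sq_sub_sq, abs_mul] at hk2
      have h5 : 2 / (n : ℝ) * |⟪b k, ξ⟫ - ⟪b k, η⟫| ≤ n * (2 * D) :=
        (mul_le_mul_of_nonneg_right hsum (abs_nonneg _)).trans hk2
      rw [div_mul_eq_mul_div, div_le_iff₀ hn'] at h5
      linarith
    have hnorm : ‖ξ - η‖ ≤ ∑ i, |⟪b i, ξ⟫ - ⟪b i, η⟫| := by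
      conv_lhs => rw [← b.sum_repr' (ξ - η)]
      refine (norm_sum_le _ _).trans (Finset.sum_le_sum fun i _ => ?_)
      rw [norm_smul, b.norm_eq_one, mul_one, inner_sub_right, Real.norm_eq_abs]
    change dist ξ η ≤ _
    rw [dist_eq_norm]
    refine hnorm.trans ?_
    rw [← Finset.add_sum_erase _ _ (Finset.mem_univ k)]
    have : ∑ i ∈ Finset.univ.erase k, |⟪b i, ξ⟫ - ⟪b i, η⟫| ≤ n * D := by
      refine (Finset.sum_le_card_nsmul _ _ D
        (fun i hi' => hi i (Finset.ne_of_mem_erase hi'))).trans ?_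
      rw [nsmul_eq_mul]
      gcongr
      have := Finset.card_erase_le (a := k) (s := (Finset.univ : Finset (Fin n)))
      simpa using this
    push_cast
    linarith
  have hd : (0 : ℝ) ≤ (n : ℝ) - 1 := by linarith
  have e := (isometry_subtype_coe (s := T)).hausdorffMeasure_image (d := (n : ℝ) - 1) (Or.inl hd)
    Set.univ
  rw [Set.image_univ, Subtype.range_coe] at e
  rw [e]
  refine (hg.le_hausdorffMeasure_image hd _).trans ?_
  gcongr
  rw [← hcard, hausdorffMeasure_pi_real]
  refine (measure_mono (t := Set.univ.pi fun i => Set.Icc (-(r i)) (r i)) ?_).trans ?_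
  · rintro _ ⟨⟨ξ, hξ⟩, -, rfl⟩ i -
    exact abs_le.1 (h3 ξ hξ i)
  · rw [volume_pi_pi]
    refine le_of_eq (Finset.prod_congr rfl fun i _ => ?_)
    rw [Real.volume_Icc]; ring_nf

lemma cover_bound (n : ℕ) (hn : 0 < n) (E : Type*) [NormedAddCommGroup E] [InnerProductSpace ℝ E]
    [MeasurableSpace E] [BorelSpace E]
    (b : OrthonormalBasis (Fin n) ℝ E) (T : Set E) (h1 : ∀ ξ ∈ T, ‖ξ‖ = 1) (c : ℝ≥0∞)
    (μ : Measure E)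
    (h : ∀ k : Fin n, ∀ σ : ℝ, |σ| = 1 → μ {ξ ∈ T | 1 / (n : ℝ) ≤ σ * ⟪b k, ξ⟫} ≤ c) :
    μ T ≤ (2 * n : ℕ) * c := by
  have hn' : (0 : ℝ) < n := by exact_mod_cast hn
  have hsub : T ⊆ ⋃ q : Fin n × Bool,
      {ξ ∈ T | 1 / (n : ℝ) ≤ (if q.2 then 1 else -1) * ⟪b q.1, ξ⟫} := by
    intro ξ hξ
    have : ∃ k, 1 / (n : ℝ) ≤ |⟪b k, ξ⟫| := by
      by_contra! hcon
      have e1 := b.sum_sq_inner_right ξ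
      rw [h1 ξ hξ] at e1
      have : ∑ i, ⟪b i, ξ⟫ ^ 2 < ∑ i : Fin n, 1 / (n : ℝ) := by
        refine Finset.sum_lt_sum_of_nonempty ⟨⟨0, hn⟩, Finset.mem_univ _⟩ fun i _ => ?_
        have h6 := hcon i
        have h7 : 1 / (n : ℝ) ≤ 1 := by
          rw [div_le_one hn']; exact_mod_cast hn
        rw [← sq_abs]
        nlinarith [abs_nonneg ⟪b i, ξ⟫]
      rw [e1, Finset.sum_const, Finset.card_univ, Fintype.card_fin, nsmul_eq_mul,
        mul_one_div_cancel hn'.ne'] at this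
      norm_num at this
    obtain ⟨k, hk⟩ := this
    rw [Set.mem_iUnion]
    rcases le_abs.1 hk with h | h
    · exact ⟨(k, true), hξ, by simpa using h⟩
    · exact ⟨(k, false), hξ, by simpa using h⟩
  refine (measure_mono hsub).trans ((measure_iUnion_le _).trans ?_)
  rw [tsum_fintype]
  refine (Finset.sum_le_card_nsmul _ _ c fun q _ => h q.1 _ ?_).trans ?_
  · split_ifs <;> simp
  · simp [mul_comm]

lemma sphere_finite (n : ℕ) (hn : 0 < n) :
    μH[(n : ℝ) - 1] (sphere (0 : EuclideanSpace ℝ (Fin n)) 1) < ⊤ := by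
  let b := EuclideanSpace.basisFun (Fin n) ℝ
  have hn1 : (1 : ℝ) ≤ n := by exact_mod_cast hn
  have h1 : ∀ ξ ∈ sphere (0 : EuclideanSpace ℝ (Fin n)) 1, ‖ξ‖ = 1 := by simp
  have hK : ((n + n * n : NNReal) : ℝ≥0∞) ^ ((n : ℝ) - 1) ≠ ⊤ :=
    ENNReal.rpow_ne_top_of_nonneg (by linarith) ENNReal.coe_ne_top
  refine (cover_bound n hn _ b _ h1
    (((n + n * n : NNReal) : ℝ≥0∞) ^ ((n : ℝ) - 1) * 2 ^ (n - 1)) _ fun k σ hσ => ?_).trans_lt ?_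
  · refine (piece_bound n _ b k σ hσ (fun _ => 1) _ (fun ξ hξ => h1 ξ hξ.1) (fun ξ hξ => hξ.2)
      fun ξ hξ i => ?_).trans ?_
    · have := abs_real_inner_le_norm (b i) ξ
      rwa [b.norm_eq_one, h1 ξ hξ.1, one_mul] at this
    · gcongr
      rw [Finset.prod_const, Finset.card_univ, Fintype.card_subtype_compl]; simp
  · exact ENNReal.mul_lt_top (ENNReal.natCast_lt_top _) (ENNReal.mul_lt_top hK.lt_top (by simp))

lemma strip_bound_basis (n : ℕ) (hn : 0 < n)
    (b : OrthonormalBasis (Fin n) ℝ (EuclideanSpace ℝ (Fin n))) (i0 : Fin n) :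
    ∃ C : ℝ≥0∞, C ≠ ⊤ ∧ ∀ ε : ℝ, 0 < ε →
      μH[(n : ℝ) - 1] {ξ ∈ sphere (0 : EuclideanSpace ℝ (Fin n)) 1 | |⟪b i0, ξ⟫| ≤ ε}
        ≤ C * ENNReal.ofReal ε := by
  have hn' : (0 : ℝ) < n := by exact_mod_cast hn
  have hn1 : (1 : ℝ) ≤ n := by exact_mod_cast hn
  have hK : ((n + n * n : NNReal) : ℝ≥0∞) ^ ((n : ℝ) - 1) ≠ ⊤ :=
    ENNReal.rpow_ne_top_of_nonneg (by linarith) ENNReal.coe_ne_top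
  set K := ((n + n * n : NNReal) : ℝ≥0∞) ^ ((n : ℝ) - 1) with hKdef
  have h1 : ∀ ξ ∈ sphere (0 : EuclideanSpace ℝ (Fin n)) 1, ‖ξ‖ = 1 := by simp
  set S := μH[(n : ℝ) - 1] (sphere (0 : EuclideanSpace ℝ (Fin n)) 1) with hS
  have hSfin : S < ⊤ := sphere_finite n hn
  refine ⟨S * n + (2 * n : ℕ) * (K * (2 * 2 ^ n)), ?_, fun ε hε => ?_⟩
  · refine ENNReal.add_ne_top.2 ⟨ENNReal.mul_ne_top hSfin.ne (by simp), ?_⟩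
    exact ENNReal.mul_ne_top (ENNReal.natCast_ne_top _) (ENNReal.mul_ne_top hK
      (ENNReal.mul_ne_top (by simp) (by simp)))
  rw [add_mul]
  rcases le_or_gt (1 / (n : ℝ)) ε with hle | hlt
  · refine le_trans ?_ le_self_add
    refine (measure_mono (Set.sep_subset _ _)).trans ?_
    rw [mul_assoc, ← ENNReal.ofReal_natCast n, ← ENNReal.ofReal_mul hn'.le]
    refine le_mul_of_one_le_right (by simp) ?_
    rw [ENNReal.one_le_ofReal]
    rwa [div_le_iff₀ hn', mul_comm] at hle
  · refine le_trans ?_ le_add_self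
    rw [mul_assoc]
    refine cover_bound n hn _ b _ (fun ξ hξ => h1 ξ hξ.1) _ _ fun k σ hσ => ?_
    by_cases hk : k = i0
    · subst hk
      refine le_of_eq_of_le ?_ (zero_le (a := _))
      convert measure_empty (μ := μH[(n : ℝ) - 1])
      rw [Set.eq_empty_iff_forall_notMem]
      rintro ξ ⟨⟨_, h4⟩, h5⟩
      have := le_abs_self (σ * ⟪b k, ξ⟫)
      rw [abs_mul, hσ, one_mul] at this
      linarith
    · have hk' : i0 ≠ k := fun h => hk h.symm
      refine (piece_bound n _ b k σ hσ (fun i => if i.1 = i0 then ε else 1) _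
        (fun ξ hξ => h1 ξ hξ.1.1) (fun ξ hξ => hξ.2) fun ξ hξ i => ?_).trans ?_
      · split_ifs with h
        · rw [h]; exact hξ.1.2
        · have := abs_real_inner_le_norm (b i) ξ
          rwa [b.norm_eq_one, h1 ξ hξ.1.1, one_mul] at this
      · rw [mul_assoc]
        gcongr
        rw [← Finset.mul_prod_erase _ _ (Finset.mem_univ (⟨i0, hk'⟩ : {i : Fin n // i ≠ k}))]
        rw [if_pos rfl, ENNReal.ofReal_mul (by norm_num)]
        have : ∏ x ∈ Finset.univ.erase (⟨i0, hk'⟩ : {i : Fin n // i ≠ k}),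
            ENNReal.ofReal (2 * if x.1 = i0 then ε else 1) ≤ 2 ^ n := by
          rw [Finset.prod_congr rfl (g := fun _ => (2 : ℝ≥0∞))]
          · rw [Finset.prod_const]
            refine pow_le_pow_right₀ (by norm_num) ?_
            refine (Finset.card_erase_le).trans ?_
            rw [Finset.card_univ]
            refine (Fintype.card_subtype_le _).trans (by simp)
          · intro x hx
            have : x.1 ≠ i0 := fun h => Finset.ne_of_mem_erase hx (Subtype.ext h)
            simp [this]
        calc _ ≤ ENNReal.ofReal 2 * ENNReal.ofReal ε * 2 ^ n := by gcongr
          _ = _ := by simp; ring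

lemma strip_bound (n : ℕ) (u : EuclideanSpace ℝ (Fin n)) (hu : u ≠ 0) (hn : 0 < n) :
    ∃ C : ℝ≥0∞, C ≠ ⊤ ∧ ∀ ε : ℝ, 0 < ε →
      μH[(n : ℝ) - 1] {ξ ∈ sphere (0 : EuclideanSpace ℝ (Fin n)) 1 | |⟪u, ξ⟫| ≤ ε}
        ≤ C * ENNReal.ofReal ε := by
  have hu' : 0 < ‖u‖ := norm_pos_iff.2 hu
  let i0 : Fin n := ⟨0, hn⟩
  obtain ⟨b, hb⟩ := Orthonormal.exists_orthonormalBasis_extension_of_card_eq (𝕜 := ℝ)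
    (E := EuclideanSpace ℝ (Fin n)) (ι := Fin n) (by simp) (v := fun _ => ‖u‖⁻¹ • u) (s := {i0})
    (by
      constructor
      · intro i
        simp [Set.domRestrict, norm_smul, hu'.ne']
      · intro i j hij
        exact absurd (Subsingleton.elim i j) hij)
  have hb0 : b i0 = ‖u‖⁻¹ • u := hb i0 rfl
  obtain ⟨C, hC, h⟩ := strip_bound_basis n hn b i0
  refine ⟨C * ENNReal.ofReal ‖u‖⁻¹, ENNReal.mul_ne_top hC (by simp), fun ε hε => ?_⟩
  have := h (‖u‖⁻¹ * ε) (by positivity)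
  rw [ENNReal.ofReal_mul (by positivity), ← mul_assoc] at this
  refine le_trans (measure_mono ?_) this
  rintro ξ ⟨h1, h2⟩
  refine ⟨h1, ?_⟩
  rw [hb0, real_inner_smul_left, abs_mul, abs_of_nonneg (by positivity)]
  gcongr

lemma null_set (n : ℕ) (u : EuclideanSpace ℝ (Fin n)) (hu : u ≠ 0) (hn : 0 < n) :
    ∀ᵐ ξ ∂((μH[(n : ℝ) - 1]).restrict (sphere (0 : EuclideanSpace ℝ (Fin n)) 1)), ⟪u, ξ⟫ ≠ 0 := by
  obtain ⟨C, hC, h⟩ := strip_bound n u hu hn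
  rw [ae_iff, Measure.restrict_apply' isClosed_sphere.measurableSet]
  have ht : Filter.Tendsto (fun ε : ℝ => C * ENNReal.ofReal ε) (nhdsWithin 0 (Set.Ioi 0))
      (nhds 0) := by
    have h1 : Filter.Tendsto (fun ε : ℝ => ENNReal.ofReal ε) (nhdsWithin 0 (Set.Ioi 0))
        (nhds (ENNReal.ofReal 0)) :=
      (ENNReal.continuous_ofReal.tendsto 0).mono_left nhdsWithin_le_nhds
    have := ENNReal.Tendsto.const_mul h1 (Or.inr hC)
    simpa using this
  refine le_antisymm (ge_of_tendsto ht ?_) (zero_le (a := _))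
  filter_upwards [self_mem_nhdsWithin] with ε hε
  refine (measure_mono ?_).trans (h ε hε)
  rintro ξ ⟨h1, h2⟩
  have h1 : ⟪u, ξ⟫ = 0 := by simpa using h1
  refine ⟨h2, ?_⟩
  rw [h1, abs_zero]; exact le_of_lt hε

lemma abs_rpow_integrable (n : ℕ) (u : EuclideanSpace ℝ (Fin n)) (hu : u ≠ 0) (hn : 0 < n)
    (s : ℝ) (hs : -1 < s) (hs0 : s < 0) :
    Integrable (fun ξ => |⟪u, ξ⟫| ^ s)
      ((μH[(n : ℝ) - 1]).restrict (sphere (0 : EuclideanSpace ℝ (Fin n)) 1)) := by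
  obtain ⟨C, hC, h⟩ := strip_bound n u hu hn
  set ν := ((μH[(n : ℝ) - 1]).restrict (sphere (0 : EuclideanSpace ℝ (Fin n)) 1)) with hν
  have hfin : ν Set.univ < ⊤ := by
    rw [hν, Measure.restrict_apply_univ]; exact sphere_finite n hn
  have hm : Measurable (fun ξ : EuclideanSpace ℝ (Fin n) => |⟪u, ξ⟫| ^ s) := by
    have : Measurable (fun ξ => ⟪u, ξ⟫) := by fun_prop
    fun_prop
  have hnn : ∀ ξ : EuclideanSpace ℝ (Fin n), 0 ≤ |⟪u, ξ⟫| ^ s := fun ξ => by positivity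
  refine ⟨hm.aestronglyMeasurable, ?_⟩
  rw [hasFiniteIntegral_iff_ofReal (Filter.Eventually.of_forall hnn),
    lintegral_eq_lintegral_meas_le ν (Filter.Eventually.of_forall hnn) hm.aemeasurable,
    ← Set.Ioc_union_Ioi_eq_Ioi (zero_le_one (α := ℝ))]
  refine (lintegral_union_le _ _ _).trans_lt (ENNReal.add_lt_top.2 ⟨?_, ?_⟩)
  · calc _ ≤ ∫⁻ t in Set.Ioc (0 : ℝ) 1, ν Set.univ :=
        lintegral_mono fun t => measure_mono (Set.subset_univ _)
      _ < ⊤ := by simp [hfin]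
  · have hs1 : 1 / s < -1 := by
      rw [div_lt_iff_of_neg hs0]; linarith
    have hint := integrableOn_Ioi_rpow_of_lt hs1 (zero_lt_one (α := ℝ))
    calc _ ≤ ∫⁻ t in Set.Ioi (1 : ℝ), C * ENNReal.ofReal (t ^ (1 / s)) := by
          refine setLIntegral_mono (by fun_prop) fun t ht => ?_
          have ht : (1 : ℝ) < t := ht
          have ht0 : 0 < t := by linarith
          refine le_trans ?_ (h (t ^ (1 / s)) (by positivity))
          rw [hν, Measure.restrict_apply' isClosed_sphere.measurableSet]
          refine measure_mono ?_
          rintro ξ ⟨h1, h2⟩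
          refine ⟨h2, ?_⟩
          have h1 : t ≤ |⟪u, ξ⟫| ^ s := h1
          have := Real.rpow_le_rpow_of_nonpos ht0 h1 (z := 1 / s) (by linarith)
          rwa [← Real.rpow_mul (abs_nonneg _), mul_one_div_cancel hs0.ne, Real.rpow_one] at this
      _ = C * ∫⁻ t in Set.Ioi (1 : ℝ), ENNReal.ofReal (t ^ (1 / s)) := by
          rw [lintegral_const_mul _ (by fun_prop)]
      _ < ⊤ := by
          refine ENNReal.mul_lt_top hC.lt_top ?_
          have h3 := hint.2
          rwa [hasFiniteIntegral_iff_ofReal] at h3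
          filter_upwards [ae_restrict_mem measurableSet_Ioi] with t ht
          have ht : (1 : ℝ) < t := ht
          have ht0 : 0 < t := by linarith
          positivity

theorem second_derivatives_lp_cosine (n : ℕ) (hn : 2 ≤ n) (p : ℝ) (hp : 1 < p)
    (hpe : ∀ k : ℕ, p ≠ 2 * k)
    (f : EuclideanSpace ℝ (Fin n) → ℝ) (hf_meas : Measurable f)
    (hf_bdd : ∃ M : ℝ, ∀ ξ, |f ξ| ≤ M)
    (H : EuclideanSpace ℝ (Fin n) → ℝ)
    (hH : ∀ x, H x = ∫ ξ in sphere (0 : EuclideanSpace ℝ (Fin n)) 1,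
      |⟪x, ξ⟫| ^ p * f ξ ∂(μH[(n : ℝ) - 1])) :
    ∀ u : EuclideanSpace ℝ (Fin n), u ≠ 0 → ∀ i j : Fin n,
      pd n i (pd n j H) u =
        p * (p - 1) *
          ∫ ξ in sphere (0 : EuclideanSpace ℝ (Fin n)) 1,
            |⟪u, ξ⟫| ^ (p - 2) * ξ i * ξ j * f ξ ∂(μH[(n : ℝ) - 1]) := by
  obtain ⟨M, hM⟩ := hf_bdd
  have hM0 : 0 ≤ M := (abs_nonneg _).trans (hM 0)
  intro u hu i j
  have hn0 : 0 < n := by omega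
  have hp2 : p ≠ 2 := by simpa using hpe 1
  set ν : Measure (EuclideanSpace ℝ (Fin n)) :=
    (μH[(n : ℝ) - 1]).restrict (sphere (0 : EuclideanSpace ℝ (Fin n)) 1) with hν
  have : IsFiniteMeasure ν := ⟨by
    rw [hν, Measure.restrict_apply_univ]; exact sphere_finite n hn0⟩
  have hS : ∀ᵐ ξ ∂ν, ‖ξ‖ = 1 := by
    filter_upwards [ae_restrict_mem (isClosed_sphere
      (x := (0 : EuclideanSpace ℝ (Fin n))) (ε := 1)).measurableSet] with ξ hξ
    simpa using hξ
  have hcoord : ∀ (ξ : EuclideanSpace ℝ (Fin n)) (k : Fin n), ‖ξ‖ = 1 → |ξ k| ≤ 1 := by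
    intro ξ k h
    rw [← h]; exact PiLp.norm_apply_le ξ k
  have hin : ∀ x ξ : EuclideanSpace ℝ (Fin n), ‖ξ‖ = 1 → |⟪x, ξ⟫| ≤ ‖x‖ := by
    intro x ξ h
    have := abs_real_inner_le_norm x ξ
    rwa [h, mul_one] at this
  have hlin : ∀ x ξ : EuclideanSpace ℝ (Fin n),
      HasFDerivAt (fun y : EuclideanSpace ℝ (Fin n) => ⟪y, ξ⟫) (innerSL ℝ ξ) x := by
    intro x ξ
    have := (innerSL ℝ ξ).hasFDerivAt (x := x)
    refine this.congr_of_eventuallyEq (Filter.Eventually.of_forall fun y => ?_)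
    simp [real_inner_comm]
  have hinn : ∀ (ξ : EuclideanSpace ℝ (Fin n)) (k : Fin n),
      innerSL ℝ ξ (EuclideanSpace.single k 1) = ξ k := by
    intro ξ k
    simp [EuclideanSpace.inner_single_right]
  have hmeas : ∀ x : EuclideanSpace ℝ (Fin n), Measurable (fun ξ => ⟪x, ξ⟫) := fun x => by fun_prop
  have hcm : ∀ k : Fin n, Measurable (fun ξ : EuclideanSpace ℝ (Fin n) => ξ k) := fun k => by fun_prop
  have hLm : Measurable (fun ξ : EuclideanSpace ℝ (Fin n) => innerSL ℝ ξ) :=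
    (innerSL ℝ).continuous.measurable
  -- first derivative
  have hD1 : ∀ x, pd n j H x = ∫ ξ, p * (|⟪x, ξ⟫| ^ (p - 2) * ⟪x, ξ⟫) * ξ j * f ξ ∂ν := by
    intro x
    have hbd : ∀ ξ : EuclideanSpace ℝ (Fin n), ‖ξ‖ = 1 → ∀ y ∈ ball x 1,
        ‖(p * (|⟪y, ξ⟫| ^ (p - 2) * ⟪y, ξ⟫) * f ξ) • innerSL ℝ ξ‖
          ≤ p * (‖x‖ + 1) ^ (p - 1) * M := by
      intro ξ hξ y hy
      rw [norm_smul, innerSL_apply_norm, hξ, mul_one, norm_mul, norm_mul, Real.norm_eq_abs,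
        Real.norm_eq_abs, Real.norm_eq_abs, phi_abs p hp, abs_of_nonneg (by linarith : 0 ≤ p)]
      have h1 : |⟪y, ξ⟫| ≤ ‖x‖ + 1 := by
        refine (hin y ξ hξ).trans ?_
        rw [mem_ball, dist_eq_norm] at hy
        have := norm_le_norm_add_norm_sub' y x
        linarith
      gcongr
      exact hM ξ
    have hF'm : AEStronglyMeasurable
        (fun ξ => (p * (|⟪x, ξ⟫| ^ (p - 2) * ⟪x, ξ⟫) * f ξ) • innerSL ℝ ξ) ν := by
      have := hmeas x
      have h2 : Measurable
        (fun ξ => (p * (|⟪x, ξ⟫| ^ (p - 2) * ⟪x, ξ⟫) * f ξ) • innerSL ℝ ξ) := by fun_prop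
      exact h2.aestronglyMeasurable
    have hF'i : Integrable
        (fun ξ => (p * (|⟪x, ξ⟫| ^ (p - 2) * ⟪x, ξ⟫) * f ξ) • innerSL ℝ ξ) ν := by
      refine Integrable.of_bound hF'm (p * (‖x‖ + 1) ^ (p - 1) * M) ?_
      filter_upwards [hS] with ξ hξ
      exact hbd ξ hξ x (mem_ball_self one_pos)
    have hFm : ∀ y, AEStronglyMeasurable (fun ξ => |⟪y, ξ⟫| ^ p * f ξ) ν := by
      intro y
      have := hmeas y
      have h2 : Measurable (fun ξ => |⟪y, ξ⟫| ^ p * f ξ) := by fun_prop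
      exact h2.aestronglyMeasurable
    have hmain := hasFDerivAt_integral_of_dominated_of_fderiv_le (𝕜 := ℝ) (μ := ν)
      (F := fun y ξ => |⟪y, ξ⟫| ^ p * f ξ)
      (F' := fun y ξ => (p * (|⟪y, ξ⟫| ^ (p - 2) * ⟪y, ξ⟫) * f ξ) • innerSL ℝ ξ)
      (bound := fun _ => p * (‖x‖ + 1) ^ (p - 1) * M) (x₀ := x) (s := ball x 1)
      (ball_mem_nhds x one_pos) (Filter.Eventually.of_forall hFm)
      (by
        refine Integrable.of_bound (hFm x) (‖x‖ ^ p * M) ?_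
        filter_upwards [hS] with ξ hξ
        rw [norm_mul, Real.norm_eq_abs, Real.norm_eq_abs, abs_of_nonneg (by positivity)]
        have := hin x ξ hξ
        gcongr
        exact hM ξ)
      hF'm (by filter_upwards [hS] with ξ hξ using hbd ξ hξ) (integrable_const _)
      (by
        refine Filter.Eventually.of_forall fun ξ y _ => ?_
        have := ((hasDerivAt_abs_rpow ⟪y, ξ⟫ hp).comp_hasFDerivAt y (hlin y ξ)).mul_const (f ξ)
        refine this.congr_fderiv ?_
        rw [smul_smul]; congr 1; ring)
    have hHe : H = fun y => ∫ ξ, |⟪y, ξ⟫| ^ p * f ξ ∂ν := funext hH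
    rw [← hHe] at hmain
    rw [pd, hmain.fderiv, ContinuousLinearMap.integral_apply hF'i]
    refine integral_congr_ae (Filter.Eventually.of_forall fun ξ => ?_)
    simp only [smul_apply, smul_eq_mul, hinn]
    ring
  -- second derivative
  have hGm : ∀ y, AEStronglyMeasurable
      (fun ξ => p * (|⟪y, ξ⟫| ^ (p - 2) * ⟪y, ξ⟫) * ξ j * f ξ) ν := by
    intro y
    have := hmeas y
    have h2 : Measurable
      (fun ξ => p * (|⟪y, ξ⟫| ^ (p - 2) * ⟪y, ξ⟫) * ξ j * f ξ) := by fun_prop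
    exact h2.aestronglyMeasurable
  have hG'm : AEStronglyMeasurable
      (fun ξ => (p * ((p - 1) * |⟪u, ξ⟫| ^ (p - 2)) * ξ j * f ξ) • innerSL ℝ ξ) ν := by
    have := hmeas u
    have h2 : Measurable
      (fun ξ => (p * ((p - 1) * |⟪u, ξ⟫| ^ (p - 2)) * ξ j * f ξ) • innerSL ℝ ξ) := by fun_prop
    exact h2.aestronglyMeasurable
  have hnull : ∀ᵐ ξ ∂ν, ⟪u, ξ⟫ ≠ 0 := null_set n u hu hn0
  -- a scalar Lipschitz bound at the base point
  obtain ⟨B, hBi, hB⟩ : ∃ B : EuclideanSpace ℝ (Fin n) → ℝ, Integrable B ν ∧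
      ∀ᵐ ξ ∂ν, 0 ≤ B ξ ∧ ∀ y ∈ ball u 1,
        |(|⟪y, ξ⟫| ^ (p - 2) * ⟪y, ξ⟫) - (|⟪u, ξ⟫| ^ (p - 2) * ⟪u, ξ⟫)| ≤ B ξ * ‖y - u‖ := by
    rcases lt_or_gt_of_ne hp2 with hlt | hgt
    · refine ⟨fun ξ => 2 * |⟪u, ξ⟫| ^ (p - 2),
        (abs_rpow_integrable n u hu hn0 (p - 2) (by linarith) (by linarith)).const_mul 2, ?_⟩
      filter_upwards [hS, hnull] with ξ hξ h0
      refine ⟨by positivity, fun y _ => (phi_lip_small p hp hlt _ _ h0).trans ?_⟩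
      rw [← inner_sub_left]
      gcongr
      exact hin _ _ hξ
    · refine ⟨fun _ => (p - 1) * (‖u‖ + 1) ^ (p - 2), integrable_const _, ?_⟩
      filter_upwards [hS] with ξ hξ
      have hC : 0 ≤ (p - 1) * (‖u‖ + 1) ^ (p - 2) := mul_nonneg (by linarith) (by positivity)
      refine ⟨hC, fun y hy => (phi_lip_big p hgt (‖u‖ + 1) _ _ ?_ ?_).trans ?_⟩
      · have := hin u ξ hξ
        linarith
      · refine (hin y ξ hξ).trans ?_
        rw [mem_ball, dist_eq_norm] at hy
        have := norm_le_norm_add_norm_sub' y u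
        linarith
      · rw [← inner_sub_left]
        exact mul_le_mul_of_nonneg_left (hin _ _ hξ) hC
  have hmain := hasFDerivAt_integral_of_dominated_loc_of_lip' (𝕜 := ℝ) (μ := ν)
    (F := fun y ξ => p * (|⟪y, ξ⟫| ^ (p - 2) * ⟪y, ξ⟫) * ξ j * f ξ)
    (F' := fun ξ => (p * ((p - 1) * |⟪u, ξ⟫| ^ (p - 2)) * ξ j * f ξ) • innerSL ℝ ξ)
    (bound := fun ξ => p * M * B ξ) (x₀ := u) (s := ball u 1)
    (ball_mem_nhds u one_pos) (fun y _ => hGm y)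
    (by
      refine Integrable.of_bound (hGm u) (p * ‖u‖ ^ (p - 1) * 1 * M) ?_
      filter_upwards [hS] with ξ hξ
      rw [norm_mul, norm_mul, norm_mul, Real.norm_eq_abs, Real.norm_eq_abs, Real.norm_eq_abs,
        Real.norm_eq_abs, phi_abs p hp, abs_of_nonneg (by linarith : 0 ≤ p)]
      have := hin u ξ hξ
      have := hcoord ξ j hξ
      gcongr
      exact hM ξ)
    hG'm
    (by
      filter_upwards [hS, hB] with ξ hξ hBξ y hy
      have h1 := hBξ.2 y hy
      have h2 := hcoord ξ j hξ
      have h3 := hM ξ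
      have h0 := hBξ.1
      rw [← sub_mul, ← sub_mul, ← mul_sub, norm_mul, norm_mul, norm_mul, Real.norm_eq_abs,
        Real.norm_eq_abs, Real.norm_eq_abs, Real.norm_eq_abs, abs_of_nonneg (by linarith : 0 ≤ p)]
      calc _ ≤ p * (B ξ * ‖y - u‖) * 1 * M := by gcongr
        _ = _ := by ring)
    (hBi.const_mul _)
    (by
      filter_upwards [hnull] with ξ h0
      have := ((((phi_hasDerivAt p hp ⟪u, ξ⟫ (Or.inl h0)).comp_hasFDerivAt u (hlin u ξ)).const_mul
        p).mul_const (ξ j)).mul_const (f ξ)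
      refine this.congr_fderiv ?_
      rw [smul_smul, smul_smul, smul_smul]; congr 1; ring)
  have hpe : pd n j H = fun x => ∫ ξ, p * (|⟪x, ξ⟫| ^ (p - 2) * ⟪x, ξ⟫) * ξ j * f ξ ∂ν :=
    funext hD1
  rw [pd, hpe, hmain.2.fderiv, ContinuousLinearMap.integral_apply hmain.1, ← integral_const_mul]
  refine integral_congr_ae (Filter.Eventually.of_forall fun ξ => ?_)
  simp only [smul_apply, smul_eq_mul, hinn]
  ring
end
end

section
/- (p-version of Lindquist's criterion) Let n ≥ 2, p > 1 not an even integer, f ∈ C_e(S^{n-1}) a continuous even function, and H(x) = ∫_{S^{n-1}} |⟨x,ξ⟩|^p f(ξ) dξ. Then H is a convex function on R^n if and only if for all u ∈ S^{n-1} and all x ∈ R^n, ∫_{S^{n-1}} |⟨u,ξ⟩|^{p−2} ⟨x,ξ⟩^2 f(ξ) dξ ≥ 0. -/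
open MeasureTheory Real Set Metric
open scoped RealInnerProductSpace ENNReal MeasureTheory

noncomputable section

namespace PLind

open Filter Topology ProbabilityTheory
open scoped NNReal

lemma lip_normalize {F : Type*} [NormedAddCommGroup F] [NormedSpace ℝ F] {a b : F}
    (ha : 1 ≤ ‖a‖) (hb : 1 ≤ ‖b‖) :
    ‖(‖a‖⁻¹ • a) - (‖b‖⁻¹ • b)‖ ≤ 2 * ‖a - b‖ := by
  have ha0 : 0 < ‖a‖ := by linarith
  have hb0 : 0 < ‖b‖ := by linarith
  have e : (‖a‖⁻¹ • a) - (‖b‖⁻¹ • b) = ‖a‖⁻¹ • (a - b) + (‖a‖⁻¹ - ‖b‖⁻¹) • b := by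
    module
  have h1 : ‖a‖⁻¹ ≤ 1 := inv_le_one_of_one_le₀ ha
  have h2 : |‖a‖⁻¹ - ‖b‖⁻¹| * ‖b‖ ≤ ‖a - b‖ := by
    have : (‖a‖⁻¹ - ‖b‖⁻¹) = ‖a‖⁻¹ * ((‖b‖ - ‖a‖) * ‖b‖⁻¹) := by field_simp
    rw [this, abs_mul, abs_mul, abs_of_pos (inv_pos.2 ha0), abs_of_pos (inv_pos.2 hb0)]
    have h3 : |‖b‖ - ‖a‖| ≤ ‖a - b‖ := by
      rw [abs_sub_comm]; exact abs_norm_sub_norm_le a b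
    have : ‖a‖⁻¹ * (|‖b‖ - ‖a‖| * ‖b‖⁻¹) * ‖b‖ = ‖a‖⁻¹ * |‖b‖ - ‖a‖| := by field_simp
    rw [this]
    calc _ ≤ 1 * |‖b‖ - ‖a‖| := by gcongr
      _ ≤ _ := by linarith
  rw [e]
  calc _ ≤ ‖‖a‖⁻¹ • (a - b)‖ + ‖(‖a‖⁻¹ - ‖b‖⁻¹) • b‖ := norm_add_le _ _
    _ = ‖a‖⁻¹ * ‖a - b‖ + |‖a‖⁻¹ - ‖b‖⁻¹| * ‖b‖ := by
        rw [norm_smul, norm_smul, Real.norm_eq_abs, Real.norm_eq_abs, abs_of_pos (inv_pos.2 ha0)]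
    _ ≤ 1 * ‖a - b‖ + ‖a - b‖ := by gcongr
    _ = _ := by ring

lemma sphere_finite_succ (m : ℕ) :
    (μH[(m : ℝ)] : Measure (EuclideanSpace ℝ (Fin (m + 1))))
      (sphere (0 : EuclideanSpace ℝ (Fin (m + 1))) 1) < ∞ := by
  let G : Fin (m + 1) → (Fin m → ℝ) → EuclideanSpace ℝ (Fin (m + 1)) := fun i z =>
    WithLp.toLp 2 (i.insertNth (1 : ℝ) z)
  let g : Fin (m + 1) × Bool → (Fin m → ℝ) → EuclideanSpace ℝ (Fin (m + 1)) := fun i z =>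
    (bif i.2 then (1 : ℝ) else -1) • (‖G i.1 z‖⁻¹ • G i.1 z)
  have hG1 : ∀ i z, 1 ≤ ‖G i z‖ := by
    intro i z
    have := PiLp.norm_apply_le (G i z) i
    simpa [G] using this
  obtain ⟨C, hC⟩ : ∃ C : ℝ≥0, ∀ i, LipschitzWith C (G i) := by
    refine ⟨_, fun i => ((PiLp.lipschitzWith_toLp 2 (fun _ : Fin (m + 1) => ℝ)).comp
      (?_ : LipschitzWith 1 (fun z : Fin m → ℝ => (i.insertNth (1 : ℝ) z : Fin (m + 1) → ℝ))))⟩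
    refine LipschitzWith.of_dist_le_mul fun x y => ?_
    rw [NNReal.coe_one, one_mul, dist_pi_le_iff dist_nonneg]
    intro j
    refine Fin.succAboveCases i ?_ (fun k => ?_) j
    · simp
    · simpa using dist_le_pi_dist x y k
  have hg : ∀ i, LipschitzWith (2 * C) (g i) := by
    intro i
    refine LipschitzWith.of_dist_le_mul fun x y => ?_
    rw [dist_eq_norm]
    simp only [g]
    rw [← smul_sub, norm_smul]
    have : ‖(bif i.2 then (1 : ℝ) else -1)‖ = 1 := by cases i.2 <;> simp
    rw [this, one_mul]
    have h2 := (hC i.1).dist_le_mul x y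
    rw [dist_eq_norm] at h2
    have := lip_normalize (hG1 i.1 x) (hG1 i.1 y)
    push_cast
    linarith
  have hsub : sphere (0 : EuclideanSpace ℝ (Fin (m + 1))) 1 ⊆ ⋃ i, g i '' (Icc (-1) 1) := by
    intro ξ hξ
    have hn : ‖ξ‖ = 1 := by simpa using hξ
    obtain ⟨i, hi⟩ := Finite.exists_max (fun i => |ξ i|)
    have hi0 : ξ i ≠ 0 := by
      intro h0
      have : ξ = 0 := by
        ext j
        have := hi j
        rw [h0, abs_zero] at this
        simpa using this
      rw [this] at hn
      simp at hn
    have hip : 0 < |ξ i| := abs_pos.2 hi0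
    let z : Fin m → ℝ := fun k => ξ (i.succAbove k) / ξ i
    have hGz : G i z = (ξ i)⁻¹ • ξ := by
      ext j
      refine Fin.succAboveCases i ?_ (fun k => ?_) j
      · simp [G, hi0]
      · simp [G, z, div_eq_inv_mul]
    rw [mem_iUnion]
    refine ⟨(i, decide (0 < ξ i)), z, ?_, ?_⟩
    · rw [mem_Icc, Pi.le_def, Pi.le_def, ← forall_and]
      intro k
      have : |ξ (i.succAbove k) / ξ i| ≤ 1 := by
        rw [abs_div]; exact (div_le_one hip).2 (hi _)
      simpa [z] using abs_le.1 this
    · simp only [g, hGz, norm_smul, hn, norm_inv, Real.norm_eq_abs, mul_one, inv_inv, smul_smul]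
      by_cases h : 0 < ξ i
      · simp [h, abs_of_pos h, hi0]
      · have h' : ξ i < 0 := lt_of_le_of_ne (not_lt.1 h) hi0
        simp [h, abs_of_neg h', hi0]
  refine (measure_mono hsub).trans_lt ((measure_iUnion_fintype_le _ _).trans_lt ?_)
  refine ENNReal.sum_lt_top.2 fun i _ => ?_
  refine ((hg i).hausdorffMeasure_image_le (Nat.cast_nonneg m) _).trans_lt ?_
  refine ENNReal.mul_lt_top (ENNReal.rpow_lt_top_of_nonneg (Nat.cast_nonneg m) ENNReal.coe_ne_top) ?_
  have := hausdorffMeasure_pi_real (ι := Fin m)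
  rw [Fintype.card_fin] at this
  rw [this]
  exact isCompact_Icc.measure_lt_top

lemma sphere_finite (n : ℕ) (hn : 2 ≤ n) :
    (μH[(n : ℝ) - 1] : Measure (EuclideanSpace ℝ (Fin n)))
      (sphere (0 : EuclideanSpace ℝ (Fin n)) 1) < ∞ := by
  obtain ⟨m, rfl⟩ : ∃ m, n = m + 1 := ⟨n - 1, by omega⟩
  have : ((m + 1 : ℕ) : ℝ) - 1 = m := by push_cast; ring
  rw [this]
  exact sphere_finite_succ m

/-- rotation invariance of the surface measure -/
lemma mp_sphere (n : ℕ) (d : ℝ) (R : EuclideanSpace ℝ (Fin n) ≃ₗᵢ[ℝ] EuclideanSpace ℝ (Fin n)) :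
    MeasurePreserving R
      ((μH[d] : Measure (EuclideanSpace ℝ (Fin n))).restrict (sphere 0 1))
      ((μH[d] : Measure (EuclideanSpace ℝ (Fin n))).restrict (sphere 0 1)) := by
  have h := R.toIsometryEquiv.measurePreserving_hausdorffMeasure d
  have h2 := h.restrict_preimage (s := sphere 0 1) isClosed_sphere.measurableSet
  have : R.toIsometryEquiv ⁻¹' (sphere 0 1) = sphere 0 1 := by
    ext x; simp
  rw [this] at h2
  exact h2

/-- rotations exist: explicit reflection. -/
lemma exists_rot {F : Type*} [NormedAddCommGroup F] [InnerProductSpace ℝ F] {u v : F}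
    (h : ‖u‖ = ‖v‖) : Submodule.reflection (ℝ ∙ (u + v)) u = v := by
  have h1 := Submodule.reflection_sub (v := u) (w := -v) (by simpa using h)
  rw [Submodule.reflection_orthogonal_apply, sub_neg_eq_add] at h1
  exact neg_injective h1

lemma lintegral_gauss {q : ℝ} (hq : -1 < q) :
    ∫⁻ t, ENNReal.ofReal (|t| ^ q) ∂(gaussianReal 0 1) < ∞ := by
  have hmeas : Measurable fun t : ℝ => |t| ^ q := by fun_prop
  rw [gaussianReal_of_var_ne_zero 0 one_ne_zero,
    lintegral_withDensity_eq_lintegral_mul _ (measurable_gaussianPDF 0 1) hmeas.ennreal_ofReal]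
  have hI : IntegrableOn (fun x : ℝ => |x| ^ q * rexp (-(1/2) * x ^ 2)) (Ioi 0) :=
    (integrableOn_rpow_mul_exp_neg_mul_sq (b := 1/2) (by norm_num) hq).congr_fun
      (fun x hx => by simp only; rw [abs_of_pos hx]) measurableSet_Ioi
  have hI2 : IntegrableOn (fun x : ℝ => |x| ^ q * rexp (-(1/2) * x ^ 2)) (Iio 0) := by
    have := hI.comp_neg
    simpa using this
  have hI3 : Integrable (fun x : ℝ => |x| ^ q * rexp (-(1/2) * x ^ 2)) := by
    rw [← integrableOn_univ, ← @Iio_union_Ici _ _ (0 : ℝ), integrableOn_union,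
      integrableOn_Ici_iff_integrableOn_Ioi]
    exact ⟨hI2, hI⟩
  have hI4 := (hI3.const_mul (√(2 * π))⁻¹).lintegral_lt_top
  refine lt_of_eq_of_lt (lintegral_congr fun x => ?_) hI4
  simp only [Pi.mul_apply, gaussianPDF, gaussianPDFReal]
  rw [← ENNReal.ofReal_mul (by positivity)]
  congr 1
  simp only [NNReal.coe_one, mul_one, sub_zero]
  have : -x ^ 2 / 2 = -(1/2) * x ^ 2 := by ring
  rw [this]; ring

lemma map_inner_std {n : ℕ} (ξ : EuclideanSpace ℝ (Fin n)) (hξ : ‖ξ‖ = 1) :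
    (stdGaussian (EuclideanSpace ℝ (Fin n))).map (fun y => ⟪y, ξ⟫) = gaussianReal 0 1 := by
  have h := IsGaussian.map_eq_gaussianReal (μ := stdGaussian (EuclideanSpace ℝ (Fin n)))
    (innerSL ℝ ξ)
  rw [integral_strongDual_stdGaussian, variance_dual_stdGaussian, innerSL_apply_norm, hξ] at h
  convert h using 2
  · ext y; simp [real_inner_comm]
  · simp

/-- integrability of the singular kernel -/
lemma kernel_integrable (n : ℕ) (hn : 2 ≤ n) {q : ℝ} (hq : -1 < q)
    (u : EuclideanSpace ℝ (Fin n)) :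
    Integrable (fun ξ => |⟪u, ξ⟫| ^ q)
      ((μH[(n : ℝ) - 1] : Measure (EuclideanSpace ℝ (Fin n))).restrict (sphere 0 1)) := by
  set σ := ((μH[(n : ℝ) - 1] : Measure (EuclideanSpace ℝ (Fin n))).restrict (sphere 0 1)) with hσ
  have : IsFiniteMeasure σ := ⟨by rw [hσ, Measure.restrict_apply_univ]; exact sphere_finite n hn⟩
  by_cases hu : u = 0
  · subst hu; simp
  set γ := stdGaussian (EuclideanSpace ℝ (Fin n))
  have hm : Measurable (fun z : EuclideanSpace ℝ (Fin n) × EuclideanSpace ℝ (Fin n) =>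
      ENNReal.ofReal (|⟪z.1, z.2⟫| ^ q)) := by fun_prop
  have key : ∫⁻ y, ∫⁻ ξ, ENNReal.ofReal (|⟪y, ξ⟫| ^ q) ∂σ ∂γ < ∞ := by
    rw [lintegral_lintegral_swap hm.aemeasurable]
    have : ∀ᵐ ξ ∂σ, ∫⁻ y, ENNReal.ofReal (|⟪y, ξ⟫| ^ q) ∂γ =
        ∫⁻ t, ENNReal.ofReal (|t| ^ q) ∂(gaussianReal 0 1) := by
      filter_upwards [ae_restrict_mem isClosed_sphere.measurableSet] with ξ hξ
      rw [← map_inner_std ξ (by simpa using hξ), lintegral_map (by fun_prop) (by fun_prop)]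
    rw [lintegral_congr_ae this, lintegral_const]
    exact ENNReal.mul_lt_top (lintegral_gauss hq) (measure_lt_top _ _)
  have hae := ae_lt_top hm.lintegral_prod_right' key.ne
  have hne : ∀ᵐ y ∂γ, y ≠ 0 := by
    have h1 : ∀ᵐ t ∂(gaussianReal 0 1), t ≠ (0 : ℝ) := by
      have := nullSingletonClass_gaussianReal (μ := 0) (v := 1) one_ne_zero
      simp [ae_iff]
    have hun : ‖‖u‖⁻¹ • u‖ = 1 := by
      rw [norm_smul, norm_inv, norm_norm, inv_mul_cancel₀ (norm_ne_zero_iff.2 hu)]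
    rw [← map_inner_std _ hun] at h1
    filter_upwards [ae_of_ae_map (by fun_prop) h1] with y hy h0
    simp [h0] at hy
  obtain ⟨y, hy, hy0⟩ := (hae.and hne).exists
  have hyI : Integrable (fun ξ => |⟪y, ξ⟫| ^ q) σ := by
    refine ⟨(by fun_prop : Measurable (fun ξ => |⟪y, ξ⟫| ^ q)).aestronglyMeasurable, ?_⟩
    rw [hasFiniteIntegral_iff_ofReal (ae_of_all _ fun ξ => by positivity)]
    exact hy
  -- rotate and scale
  set c := ‖u‖ / ‖y‖ with hc
  have hyn : 0 < ‖y‖ := norm_pos_iff.2 hy0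
  have hun : 0 < ‖u‖ := norm_pos_iff.2 hu
  have hc0 : 0 < c := by positivity
  have hcy : ‖u‖ = ‖c • y‖ := by
    rw [norm_smul, Real.norm_of_nonneg hc0.le, hc]; field_simp
  have hR := exists_rot hcy
  set R := Submodule.reflection (ℝ ∙ (u + c • y)) with hRdef
  have h3 := ((mp_sphere n ((n : ℝ) - 1) R).integrable_comp_of_integrable hyI).const_mul (c ^ q)
  refine h3.congr (ae_of_all _ fun ξ => ?_)
  simp only [Function.comp]
  have : ⟪u, ξ⟫ = c * ⟪y, R ξ⟫ := by
    rw [← R.inner_map_map u ξ, hR, real_inner_smul_left]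
  rw [this, abs_mul, abs_of_pos hc0, Real.mul_rpow hc0.le (abs_nonneg _)]

lemma cont_g {q : ℝ} (hq : -1 < q) : Continuous (fun s : ℝ => |s| ^ q * s) := by
  have h := (contDiff_norm_rpow (E := ℝ) (p := q + 2) (by linarith)).continuous_deriv le_rfl
  have h2 : (fun s : ℝ => |s| ^ q * s) = fun s => (q + 2)⁻¹ * deriv (fun x : ℝ => ‖x‖ ^ (q + 2)) s := by
    ext s
    rw [(hasDerivAt_norm_rpow s (p := q + 2) (by linarith)).deriv]
    have : q + 2 ≠ 0 := by linarith
    rw [Real.norm_eq_abs, add_sub_cancel_right]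
    field_simp
  rw [h2]
  exact continuous_const.mul h

lemma deriv_g {q : ℝ} {s : ℝ} (hs : s ≠ 0) :
    HasDerivAt (fun s : ℝ => |s| ^ q * s) ((q + 1) * |s| ^ q) s := by
  have hs' : |s| ≠ 0 := abs_ne_zero.2 hs
  have h1 := ((hasDerivAt_abs hs).rpow_const (p := q) (Or.inl hs')).mul (hasDerivAt_id s)
  refine h1.congr_deriv ?_
  have h2 : |s| ^ q = |s| ^ (q - 1) * |s| := by
    rw [← Real.rpow_add_one hs']; congr 1; ring
  have h3 : (SignType.sign s : ℝ) * s = |s| := sign_mul_self s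
  simp only [id, mul_one]
  rw [h2, ← h3]
  ring

lemma intervalIntegrable_abs {q : ℝ} (hq : -1 < q) (a b : ℝ) :
    IntervalIntegrable (fun s : ℝ => |s| ^ q) volume a b := by
  have h0 : ∀ c : ℝ, 0 ≤ c → IntervalIntegrable (fun s : ℝ => |s| ^ q) volume 0 c := by
    intro c hc
    refine (intervalIntegral.intervalIntegrable_rpow' (a := 0) (b := c) hq).congr ?_
    intro x hx
    rw [uIoc_of_le hc] at hx
    simp only
    rw [abs_of_pos hx.1]
  have h1 : ∀ c : ℝ, IntervalIntegrable (fun s : ℝ => |s| ^ q) volume 0 c := by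
    intro c
    rcases le_total 0 c with hc | hc
    · exact h0 c hc
    · have := (IntervalIntegrable.iff_comp_neg).1 (h0 (-c) (by linarith))
      simpa using this
  exact (h1 a).symm.trans (h1 b)

lemma oneD_int {q : ℝ} (hq : -1 < q) (a b t₁ t₂ : ℝ) :
    IntervalIntegrable (fun s : ℝ => |a + s * b| ^ q * b ^ 2) volume t₁ t₂ := by
  by_cases hb : b = 0
  · subst hb; simp
  have h := ((intervalIntegrable_abs hq (a + b * t₁) (a + b * t₂)).comp_add_left a).comp_mul_left
    (c := b)
  have e1 : (a + b * t₁ - a) / b = t₁ := by field_simp; ring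
  have e2 : (a + b * t₂ - a) / b = t₂ := by field_simp; ring
  rw [e1, e2] at h
  have h2 := h.mul_const (b ^ 2)
  simpa only [mul_comm b] using h2

lemma oneD {q : ℝ} (hq : -1 < q) (a b t₁ t₂ : ℝ) :
    ∫ s in t₁..t₂, |a + s * b| ^ q * b ^ 2 =
      (q + 1)⁻¹ * (b * (|a + t₂ * b| ^ q * (a + t₂ * b)) - b * (|a + t₁ * b| ^ q * (a + t₁ * b))) := by
  by_cases hb : b = 0
  · subst hb; simp
  have hq1 : q + 1 ≠ 0 := by linarith
  have := integral_eq_of_hasDerivAt_off_countable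
    (fun s : ℝ => (q + 1)⁻¹ * (b * (|a + s * b| ^ q * (a + s * b))))
    (fun s => |a + s * b| ^ q * b ^ 2) (a := t₁) (b := t₂) (s := {-a / b}) (countable_singleton _)
    ?_ ?_ (oneD_int hq a b t₁ t₂)
  · rw [this]; ring
  · have := (cont_g hq).comp (f := fun s : ℝ => a + s * b) (by fun_prop)
    exact (continuous_const.mul (continuous_const.mul this)).continuousOn
  · intro s hs
    have hne : a + s * b ≠ 0 := by
      intro h
      apply hs.2
      simp only [mem_singleton_iff]
      field_simp
      linarith
    have hin : HasDerivAt (fun s : ℝ => a + s * b) b s := by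
      simpa using ((hasDerivAt_id s).mul_const b).const_add a
    have h1 := (((deriv_g (q := q) hne).comp s hin).const_mul b).const_mul (q + 1)⁻¹
    refine h1.congr_deriv ?_
    field_simp

/-- the surface measure -/
def sig (n : ℕ) : Measure (EuclideanSpace ℝ (Fin n)) := (μH[(n : ℝ) - 1]).restrict (sphere 0 1)

lemma sig_fin (n : ℕ) (hn : 2 ≤ n) : IsFiniteMeasure (sig n) :=
  ⟨by rw [sig, Measure.restrict_apply_univ]; exact sphere_finite n hn⟩

lemma sig_ae (n : ℕ) : ∀ᵐ ξ ∂(sig n), ‖ξ‖ = 1 := by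
  filter_upwards [ae_restrict_mem (μ := (μH[(n : ℝ) - 1] : Measure (EuclideanSpace ℝ (Fin n))))
    (isClosed_sphere (x := (0 : EuclideanSpace ℝ (Fin n))) (ε := 1)).measurableSet] with ξ hξ
  simpa using hξ

lemma sig_bdd {n : ℕ} {h : EuclideanSpace ℝ (Fin n) → ℝ} (hc : Continuous h) :
    ∃ M, 0 ≤ M ∧ ∀ ξ, ‖ξ‖ = 1 → |h ξ| ≤ M := by
  obtain ⟨M, hM⟩ := (isCompact_sphere (0 : EuclideanSpace ℝ (Fin n)) 1).exists_bound_of_continuousOn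
    hc.continuousOn
  exact ⟨max M 0, le_max_right _ _, fun ξ hξ => (hM ξ (by simpa using hξ)).trans (le_max_left _ _)⟩

lemma sig_int {n : ℕ} (hn : 2 ≤ n) {h : EuclideanSpace ℝ (Fin n) → ℝ} (hc : Continuous h) :
    Integrable h (sig n) := by
  have := sig_fin n hn
  obtain ⟨M, _, hM⟩ := sig_bdd hc
  exact Integrable.of_bound hc.aestronglyMeasurable M ((sig_ae n).mono fun ξ hξ => hM ξ hξ)

variable {n : ℕ}

lemma abs_inner_le {x ξ : EuclideanSpace ℝ (Fin n)} (hξ : ‖ξ‖ = 1) : |⟪x, ξ⟫| ≤ ‖x‖ := by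
  simpa [hξ] using abs_real_inner_le_norm x ξ

/-- The second-derivative kernel integral. -/
def Kf (q : ℝ) (f : EuclideanSpace ℝ (Fin n) → ℝ) (u x : EuclideanSpace ℝ (Fin n)) : ℝ :=
  ∫ ξ, |⟪u, ξ⟫| ^ q * ⟪x, ξ⟫ ^ 2 * f ξ ∂(sig n)

/-- The first derivative along a line. -/
def Df (q : ℝ) (f : EuclideanSpace ℝ (Fin n) → ℝ) (x v : EuclideanSpace ℝ (Fin n)) (t : ℝ) : ℝ :=
  ∫ ξ, (⟪v, ξ⟫ * (|⟪x, ξ⟫ + t * ⟪v, ξ⟫| ^ q * (⟪x, ξ⟫ + t * ⟪v, ξ⟫))) * f ξ ∂(sig n)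

lemma cont_Df {q : ℝ} (hq : -1 < q) {f : EuclideanSpace ℝ (Fin n) → ℝ} (hf : Continuous f)
    (x v : EuclideanSpace ℝ (Fin n)) (t : ℝ) :
    Continuous fun ξ => (⟪v, ξ⟫ * (|⟪x, ξ⟫ + t * ⟪v, ξ⟫| ^ q * (⟪x, ξ⟫ + t * ⟪v, ξ⟫))) * f ξ := by
  have := (cont_g hq).comp (f := fun ξ : EuclideanSpace ℝ (Fin n) => ⟪x, ξ⟫ + t * ⟪v, ξ⟫)
    (by fun_prop)
  have h2 : Continuous fun ξ : EuclideanSpace ℝ (Fin n) => ⟪v, ξ⟫ := by fun_prop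
  exact (h2.mul this).mul hf

lemma hasDeriv_line (hn : 2 ≤ n) {q : ℝ} (hq : -1 < q) {f : EuclideanSpace ℝ (Fin n) → ℝ}
    (hf : Continuous f) (x v : EuclideanSpace ℝ (Fin n)) (t₀ : ℝ) :
    HasDerivAt (fun t => ∫ ξ, |⟪x, ξ⟫ + t * ⟪v, ξ⟫| ^ (q + 2) * f ξ ∂(sig n))
      ((q + 2) * Df q f x v t₀) t₀ := by
  have := sig_fin n hn
  obtain ⟨M, hM0, hM⟩ := sig_bdd hf
  obtain ⟨G, hG⟩ := (isCompact_Icc (a := -(‖x‖ + (|t₀| + 1) * ‖v‖))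
    (b := ‖x‖ + (|t₀| + 1) * ‖v‖)).exists_bound_of_continuousOn (cont_g hq).continuousOn
  have hcont : ∀ t, Continuous fun ξ : EuclideanSpace ℝ (Fin n) =>
      |⟪x, ξ⟫ + t * ⟪v, ξ⟫| ^ (q + 2) * f ξ := by
    intro t
    refine Continuous.mul ?_ hf
    refine Continuous.rpow_const (by fun_prop) fun ξ => Or.inr (by linarith)
  have h := hasDerivAt_integral_of_dominated_loc_of_deriv_le (μ := sig n)
    (F := fun t ξ => |⟪x, ξ⟫ + t * ⟪v, ξ⟫| ^ (q + 2) * f ξ)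
    (F' := fun t ξ => (q + 2) *
      ((⟪v, ξ⟫ * (|⟪x, ξ⟫ + t * ⟪v, ξ⟫| ^ q * (⟪x, ξ⟫ + t * ⟪v, ξ⟫))) * f ξ))
    (x₀ := t₀) (s := ball t₀ 1) (bound := fun _ => (q + 2) * ((‖v‖ * G) * M))
    (ball_mem_nhds _ one_pos)
    (Eventually.of_forall fun t => (hcont t).aestronglyMeasurable) (sig_int hn (hcont t₀))
    (continuous_const.mul (cont_Df hq hf x v t₀)).aestronglyMeasurable ?_ (integrable_const _) ?_
  · have h2 := h.2
    rw [integral_const_mul] at h2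
    exact h2
  · filter_upwards [sig_ae n] with ξ hξ t ht
    have ht' : |t| ≤ |t₀| + 1 := by
      have : |t - t₀| < 1 := by simpa [Real.dist_eq] using ht
      have h3 := abs_sub_abs_le_abs_sub t t₀
      linarith
    have hB : |⟪x, ξ⟫ + t * ⟪v, ξ⟫| ≤ ‖x‖ + (|t₀| + 1) * ‖v‖ := by
      refine (abs_add_le _ _).trans ?_
      rw [abs_mul]
      have h1 := abs_inner_le (x := x) hξ
      have h2 := abs_inner_le (x := v) hξ
      gcongr
    have hg := hG _ (abs_le.1 hB)
    have h2 := abs_inner_le (x := v) hξ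
    have h3 := hM ξ hξ
    rw [norm_mul, norm_mul, norm_mul, Real.norm_of_nonneg (by linarith : (0:ℝ) ≤ q + 2)]
    have hq2 : 0 ≤ q + 2 := by linarith
    have : 0 ≤ G := (norm_nonneg _).trans hg
    simp only [Real.norm_eq_abs] at hg ⊢
    gcongr
  · refine ae_of_all _ fun ξ t _ => ?_
    have hin : HasDerivAt (fun s : ℝ => ⟪x, ξ⟫ + s * ⟪v, ξ⟫) ⟪v, ξ⟫ t := by
      simpa using ((hasDerivAt_id t).mul_const ⟪v, ξ⟫).const_add ⟪x, ξ⟫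
    have h1 := ((hasDerivAt_abs_rpow (⟪x, ξ⟫ + t * ⟪v, ξ⟫) (p := q + 2) (by linarith)).comp t
      hin).mul_const (f ξ)
    refine h1.congr_deriv ?_
    rw [add_sub_cancel_right]
    ring

lemma fubini_line (hn : 2 ≤ n) {q : ℝ} (hq : -1 < q) {f : EuclideanSpace ℝ (Fin n) → ℝ}
    (hf : Continuous f) (x v : EuclideanSpace ℝ (Fin n)) {t₁ t₂ : ℝ} (ht : t₁ ≤ t₂) :
    IntervalIntegrable (fun s => Kf q f (x + s • v) v) volume t₁ t₂ ∧
    ∫ s in t₁..t₂, Kf q f (x + s • v) v = (q + 1)⁻¹ * (Df q f x v t₂ - Df q f x v t₁) := by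
  have := sig_fin n hn
  have hinner : ∀ s ξ, ⟪x + s • v, ξ⟫ = ⟪x, ξ⟫ + s * ⟪v, ξ⟫ := fun s ξ => by
    rw [inner_add_left, real_inner_smul_left]
  let F : ℝ → EuclideanSpace ℝ (Fin n) → ℝ := fun s ξ =>
    |⟪x, ξ⟫ + s * ⟪v, ξ⟫| ^ q * ⟪v, ξ⟫ ^ 2 * f ξ
  have hFm : Measurable (Function.uncurry F) := by
    simp only [F, Function.uncurry_def]
    have : Measurable f := hf.measurable
    fun_prop
  have hsec : ∀ ξ, IntegrableOn (fun s => F s ξ) (Ioc t₁ t₂) := fun ξ => by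
    have := (oneD_int hq ⟪x, ξ⟫ ⟪v, ξ⟫ t₁ t₂).mul_const (f ξ)
    exact (intervalIntegrable_iff_integrableOn_Ioc_of_le ht).1 this
  have hint : Integrable (Function.uncurry F) ((volume.restrict (Ioc t₁ t₂)).prod (sig n)) := by
    rw [integrable_prod_iff' hFm.aestronglyMeasurable]
    refine ⟨ae_of_all _ hsec, ?_⟩
    have h1 : ∀ ξ, ∫ s in Ioc t₁ t₂, ‖Function.uncurry F (s, ξ)‖ =
        (q + 1)⁻¹ * ((⟪v, ξ⟫ * (|⟪x, ξ⟫ + t₂ * ⟪v, ξ⟫| ^ q * (⟪x, ξ⟫ + t₂ * ⟪v, ξ⟫))) * |f ξ|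
          - (⟪v, ξ⟫ * (|⟪x, ξ⟫ + t₁ * ⟪v, ξ⟫| ^ q * (⟪x, ξ⟫ + t₁ * ⟪v, ξ⟫))) * |f ξ|) := by
      intro ξ
      have h2 : ∀ s, ‖Function.uncurry F (s, ξ)‖ =
          |⟪x, ξ⟫ + s * ⟪v, ξ⟫| ^ q * ⟪v, ξ⟫ ^ 2 * |f ξ| := fun s => by
        simp only [Function.uncurry, F, norm_mul, Real.norm_eq_abs]
        rw [abs_of_nonneg (Real.rpow_nonneg (abs_nonneg _) q), abs_of_nonneg (sq_nonneg ⟪v, ξ⟫ : 0 ≤ ⟪v, ξ⟫ ^ 2)]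
      simp_rw [h2]
      rw [integral_mul_const, ← intervalIntegral.integral_of_le ht, oneD hq]
      ring
    simp_rw [h1]
    exact ((sig_int hn (cont_Df hq hf.abs x v t₂)).sub
      (sig_int hn (cont_Df hq hf.abs x v t₁))).const_mul _
  have hK : ∀ s, Kf q f (x + s • v) v = ∫ ξ, F s ξ ∂(sig n) := fun s => by
    simp only [Kf, hinner, F]
  constructor
  · rw [intervalIntegrable_iff_integrableOn_Ioc_of_le ht]
    simp_rw [hK]
    exact hint.integral_prod_left
  · rw [intervalIntegral.integral_of_le ht]
    simp_rw [hK]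
    rw [integral_integral_swap hint]
    have h1 : ∀ ξ, ∫ s in Ioc t₁ t₂, F s ξ =
        (q + 1)⁻¹ * ((⟪v, ξ⟫ * (|⟪x, ξ⟫ + t₂ * ⟪v, ξ⟫| ^ q * (⟪x, ξ⟫ + t₂ * ⟪v, ξ⟫))) * f ξ
          - (⟪v, ξ⟫ * (|⟪x, ξ⟫ + t₁ * ⟪v, ξ⟫| ^ q * (⟪x, ξ⟫ + t₁ * ⟪v, ξ⟫))) * f ξ) := by
      intro ξ
      simp only [F]
      rw [integral_mul_const, ← intervalIntegral.integral_of_le ht, oneD hq]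
      ring
    simp_rw [h1]
    rw [integral_const_mul, integral_sub (sig_int hn (cont_Df hq hf x v t₂))
      (sig_int hn (cont_Df hq hf x v t₁))]
    rfl

lemma Kf_rot {q : ℝ} {f : EuclideanSpace ℝ (Fin n) → ℝ} {u w : EuclideanSpace ℝ (Fin n)}
    (x : EuclideanSpace ℝ (Fin n)) (h : ‖u‖ = ‖w‖) :
    Kf q f w x = ∫ ξ, |⟪u, ξ⟫| ^ q * ⟪x, Submodule.reflection (ℝ ∙ (u + w)) ξ⟫ ^ 2 *
      f (Submodule.reflection (ℝ ∙ (u + w)) ξ) ∂(sig n) := by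
  have hR := exists_rot h
  set R := Submodule.reflection (ℝ ∙ (u + w)) with hRdef
  have h1 := (mp_sphere n ((n : ℝ) - 1) R).integral_comp
    R.toHomeomorph.measurableEmbedding (fun ξ => |⟪w, ξ⟫| ^ q * ⟪x, ξ⟫ ^ 2 * f ξ)
  rw [Kf, sig, ← h1]
  refine integral_congr_ae (ae_of_all _ fun ξ => ?_)
  simp only
  rw [← hR, R.inner_map_map]

lemma Kf_cont (hn : 2 ≤ n) {q : ℝ} (hq : -1 < q) {f : EuclideanSpace ℝ (Fin n) → ℝ}
    (hf : Continuous f) {u : EuclideanSpace ℝ (Fin n)} (hu : ‖u‖ = 1)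
    (x : EuclideanSpace ℝ (Fin n)) :
    Tendsto (fun w => Kf q f w x) (𝓝[sphere 0 1] u) (𝓝 (Kf q f u x)) := by
  obtain ⟨M, hM0, hM⟩ := sig_bdd hf
  have hev : (fun w => ∫ ξ, |⟪u, ξ⟫| ^ q * ⟪x, Submodule.reflection (ℝ ∙ (u + w)) ξ⟫ ^ 2 *
      f (Submodule.reflection (ℝ ∙ (u + w)) ξ) ∂(sig n)) =ᶠ[𝓝[sphere 0 1] u]
      (fun w => Kf q f w x) := by
    filter_upwards [self_mem_nhdsWithin] with w hw
    exact (Kf_rot x (by rw [hu]; simpa using hw.symm)).symm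
  refine Tendsto.congr' hev ?_
  rw [Kf_rot (u := u) (w := u) x rfl]
  refine tendsto_integral_filter_of_dominated_convergence
    (fun ξ => |⟪u, ξ⟫| ^ q * (‖x‖ ^ 2 * M)) ?_ ?_ ((kernel_integrable n hn hq u).mul_const _) ?_
  · refine Eventually.of_forall fun w => ?_
    have hfm := hf.measurable
    have hRm : Measurable (Submodule.reflection (ℝ ∙ (u + w))) :=
      (Submodule.reflection (ℝ ∙ (u + w))).continuous.measurable
    exact (by fun_prop : Measurable fun ξ =>
      |⟪u, ξ⟫| ^ q * ⟪x, Submodule.reflection (ℝ ∙ (u + w)) ξ⟫ ^ 2 *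
      f (Submodule.reflection (ℝ ∙ (u + w)) ξ)).aestronglyMeasurable
  · refine Eventually.of_forall fun w => ?_
    filter_upwards [sig_ae n] with ξ hξ
    have hRξ : ‖Submodule.reflection (ℝ ∙ (u + w)) ξ‖ = 1 := by
      rw [LinearIsometryEquiv.norm_map, hξ]
    rw [norm_mul, norm_mul, norm_pow, Real.norm_of_nonneg (Real.rpow_nonneg (abs_nonneg _) q),
      mul_assoc, Real.norm_eq_abs, Real.norm_eq_abs]
    have h1 := abs_inner_le (x := x) hRξ
    have h2 := hM _ hRξ
    gcongr
  · refine ae_of_all _ fun ξ => ?_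
    have hRt : Tendsto (fun w => Submodule.reflection (ℝ ∙ (u + w)) ξ) (𝓝[sphere 0 1] u)
        (𝓝 (Submodule.reflection (ℝ ∙ (u + u)) ξ)) := by
      have hne : ‖u + u‖ ≠ 0 := by
        rw [← two_smul ℝ u, norm_smul, hu]; norm_num
      have hc : ContinuousAt (fun w => Submodule.reflection (ℝ ∙ (u + w)) ξ) u := by
        simp only [Submodule.reflection_singleton_apply]
        have hd : ContinuousAt (fun w : EuclideanSpace ℝ (Fin n) =>
            ⟪u + w, ξ⟫ / ((‖u + w‖ : ℝ) ^ 2)) u := by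
          refine ContinuousAt.div (by fun_prop) (by fun_prop) (pow_ne_zero 2 hne)
        have hs : ContinuousAt (fun w : EuclideanSpace ℝ (Fin n) => u + w) u := by fun_prop
        exact ((hd.smul hs).const_smul 2).sub continuousAt_const
      exact hc.tendsto.mono_left nhdsWithin_le_nhds
    have h1 : Tendsto (fun w => ⟪x, Submodule.reflection (ℝ ∙ (u + w)) ξ⟫) (𝓝[sphere 0 1] u)
        (𝓝 ⟪x, Submodule.reflection (ℝ ∙ (u + u)) ξ⟫) := tendsto_const_nhds.inner hRt
    exact (tendsto_const_nhds.mul (h1.pow 2)).mul ((hf.tendsto _).comp hRt)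

lemma Kf_smul {q : ℝ} {f : EuclideanSpace ℝ (Fin n) → ℝ} {c : ℝ} (hc : 0 ≤ c)
    (u x : EuclideanSpace ℝ (Fin n)) : Kf q f (c • u) x = c ^ q * Kf q f u x := by
  simp only [Kf]
  rw [← integral_const_mul]
  refine integral_congr_ae (ae_of_all _ fun ξ => ?_)
  simp only
  rw [real_inner_smul_left, abs_mul, abs_of_nonneg hc, Real.mul_rpow hc (abs_nonneg _)]
  ring

lemma Kf_normalize {q : ℝ} {f : EuclideanSpace ℝ (Fin n) → ℝ} {u : EuclideanSpace ℝ (Fin n)}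
    (hu : u ≠ 0) (x : EuclideanSpace ℝ (Fin n)) :
    Kf q f u x = ‖u‖ ^ q * Kf q f (‖u‖⁻¹ • u) x := by
  rw [← Kf_smul (norm_nonneg u), smul_smul, mul_inv_cancel₀ (norm_ne_zero_iff.2 hu), one_smul]

lemma norm_normalize {u : EuclideanSpace ℝ (Fin n)} (hu : u ≠ 0) : ‖‖u‖⁻¹ • u‖ = 1 := by
  rw [norm_smul, norm_inv, norm_norm, inv_mul_cancel₀ (norm_ne_zero_iff.2 hu)]

lemma main_iff (hn : 2 ≤ n) {q : ℝ} (hq : -1 < q) (hq0 : q ≠ 0)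
    {f : EuclideanSpace ℝ (Fin n) → ℝ} (hf : Continuous f) (H : EuclideanSpace ℝ (Fin n) → ℝ)
    (hH : ∀ x, H x = ∫ ξ, |⟪x, ξ⟫| ^ (q + 2) * f ξ ∂(sig n)) :
    ConvexOn ℝ Set.univ H ↔ ∀ u, ‖u‖ = 1 → ∀ x, 0 ≤ Kf q f u x := by
  have hline : ∀ x v t, HasDerivAt (fun t : ℝ => H (x + t • v)) ((q + 2) * Df q f x v t) t := by
    intro x v t
    have h := hasDeriv_line hn hq hf x v t
    refine h.congr_of_eventuallyEq (Eventually.of_forall fun s => ?_)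
    simp only [hH, inner_add_left, real_inner_smul_left]
  have hderiv : ∀ x v, deriv (fun t : ℝ => H (x + t • v)) = fun t => (q + 2) * Df q f x v t :=
    fun x v => funext fun t => (hline x v t).deriv
  have hq2 : 0 < q + 2 := by linarith
  have hq1 : 0 < q + 1 := by linarith
  constructor
  · intro hconv u hu x
    by_contra! hneg
    have hφ : ConvexOn ℝ Set.univ (fun t : ℝ => H (u + t • x)) := by
      have := hconv.comp_affineMap (AffineMap.lineMap (k := ℝ) u (u + x))
      refine this.congr fun t _ => ?_
      simp [AffineMap.lineMap_apply, add_comm]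
    have hmono := hφ.monotoneOn_deriv fun t _ => (hline u x t).differentiableAt
    rw [hderiv] at hmono
    have hu0 : u ≠ 0 := by rintro rfl; simp at hu
    have hct : ContinuousAt (fun s : ℝ => u + s • x) 0 := by fun_prop
    have hne : ∀ᶠ s : ℝ in 𝓝 0, u + s • x ≠ 0 := hct.eventually_ne (by simpa using hu0)
    have hN : Tendsto (fun s : ℝ => ‖u + s • x‖⁻¹ • (u + s • x)) (𝓝 0) (𝓝[sphere 0 1] u) := by
      refine tendsto_nhdsWithin_iff.2 ⟨?_, ?_⟩
      · have : ContinuousAt (fun s : ℝ => ‖u + s • x‖⁻¹ • (u + s • x)) 0 :=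
          (hct.norm.inv₀ (by simpa using hu0)).smul hct
        have h2 := this.tendsto
        simpa [hu] using h2
      · filter_upwards [hne] with s hs
        simpa using norm_normalize hs
    have hev := ((Kf_cont hn hq hf hu x).comp hN).eventually_lt_const hneg
    obtain ⟨δ, hδ, hball⟩ := Metric.eventually_nhds_iff.1 (hev.and hne)
    have hδ2 : (0 : ℝ) < δ / 2 := by linarith
    obtain ⟨hI, hE⟩ := fubini_line hn hq hf u x hδ2.le
    have hpos : 0 < ∫ s in (0 : ℝ)..(δ / 2), -Kf q f (u + s • x) x := by
      refine intervalIntegral.intervalIntegral_pos_of_pos_on hI.neg (fun s hs => ?_) hδ2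
      obtain ⟨h1, h2⟩ := hball (y := s) (by
        rw [Real.dist_eq, sub_zero, abs_of_pos hs.1]; linarith [hs.2])
      rw [Kf_normalize h2]
      have h3 : 0 < ‖u + s • x‖ ^ q := Real.rpow_pos_of_pos (norm_pos_iff.2 h2) q
      simp only [Function.comp] at h1
      have := mul_neg_of_pos_of_neg h3 h1
      linarith
    rw [intervalIntegral.integral_neg, hE] at hpos
    have hm := hmono (mem_univ 0) (mem_univ (δ / 2)) hδ2.le
    simp only at hm
    have hm' : 0 ≤ Df q f u x (δ / 2) - Df q f u x 0 :=
      sub_nonneg.2 (le_of_mul_le_mul_left hm hq2)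
    have := mul_nonneg (inv_pos.2 hq1).le hm'
    linarith
  · intro hK
    have hK' : ∀ u x, 0 ≤ Kf q f u x := by
      intro u x
      by_cases hu : u = 0
      · subst hu
        simp [Kf, Real.zero_rpow hq0]
      · rw [Kf_normalize hu]
        exact mul_nonneg (Real.rpow_nonneg (norm_nonneg _) _) (hK _ (norm_normalize hu) x)
    have hφ : ∀ x v, ConvexOn ℝ Set.univ (fun t : ℝ => H (x + t • v)) := by
      intro x v
      refine Monotone.convexOn_univ_of_deriv (fun t => (hline x v t).differentiableAt) ?_
      rw [hderiv]
      intro s t hst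
      have h1 := (fubini_line hn hq hf x v hst).2
      have h2 : 0 ≤ ∫ s in s..t, Kf q f (x + s • v) v :=
        intervalIntegral.integral_nonneg hst fun _ _ => hK' _ _
      rw [h1] at h2
      have h3 : 0 ≤ Df q f x v t - Df q f x v s := nonneg_of_mul_nonneg_right h2 (inv_pos.2 hq1)
      exact mul_le_mul_of_nonneg_left (sub_nonneg.1 h3) hq2.le
    refine ⟨convex_univ, fun x _ y _ a b ha hb hab => ?_⟩
    have h := (hφ x (y - x)).2 (mem_univ 0) (mem_univ 1) ha hb hab
    have e : x + (a • (0 : ℝ) + b • (1 : ℝ)) • (y - x) = a • x + b • y := by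
      have : a = 1 - b := by linarith
      subst this
      simp only [smul_eq_mul, mul_zero, mul_one, zero_add]
      module
    simp only at h
    rw [e] at h
    simpa using h

end PLind

theorem p_lindquist_criterion (n : ℕ) (hn : 2 ≤ n) (p : ℝ) (hp : 1 < p)
    (hpe : ∀ k : ℕ, p ≠ 2 * k)
    (f : EuclideanSpace ℝ (Fin n) → ℝ) (hf_cont : Continuous f)
    (hf_even : ∀ ξ, f (-ξ) = f ξ)
    (H : EuclideanSpace ℝ (Fin n) → ℝ)
    (hH : ∀ x, H x = ∫ ξ in sphere (0 : EuclideanSpace ℝ (Fin n)) 1,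
      |⟪x, ξ⟫| ^ p * f ξ ∂(μH[(n : ℝ) - 1])) :
    ConvexOn ℝ Set.univ H ↔
      ∀ u ∈ sphere (0 : EuclideanSpace ℝ (Fin n)) 1, ∀ x : EuclideanSpace ℝ (Fin n),
        0 ≤ ∫ ξ in sphere (0 : EuclideanSpace ℝ (Fin n)) 1,
          |⟪u, ξ⟫| ^ (p - 2) * ⟪x, ξ⟫ ^ 2 * f ξ ∂(μH[(n : ℝ) - 1]) := by
  have hq0 : p - 2 ≠ 0 := by
    have := hpe 1
    intro h
    apply this
    push_cast
    linarith
  have h := PLind.main_iff hn (q := p - 2) (by linarith) hq0 hf_cont H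
    (by rw [sub_add_cancel]; exact hH)
  rw [h]
  constructor
  · intro h u hu x
    exact h u (by simpa using hu) x
  · intro h u hu x
    exact h u (by simpa using hu) x
end
end
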